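/- arXiv:1302.3859 — 2 statements merged into one kernel-verified Lean document; each statement's English description precedes it below -/
import Mathlib

section
/- Let (F_0, a) be initial data for the completion problem in ℂ^d and let λ = λ↑(S_0). Then: (1) the set Λ_a^op(λ) = {λ + μ : μ ∈ Γ_d(a)} is a compact convex subset of ℝ^d; (2) the spectral picture of optimal completions satisfies {λ(S_F) : F ∈ C_a^op(F_0)} = {ν↓ : ν ∈ Λ_a^op(λ)}, where ν↓ denotes the decreasing rearrangement of ν. -/
open Finset
open scoped ComplexOrder

noncomputable def sortAsc {m : ℕ} (x : Fin m → ℝ) : Fin m → ℝ :=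
  x ∘ Tuple.sort x

noncomputable def sortDesc {m : ℕ} (x : Fin m → ℝ) : Fin m → ℝ :=
  fun i => (x ∘ Tuple.sort x) i.rev

noncomputable def pad {k : ℕ} (x : Fin k → ℝ) (m : ℕ) : Fin m → ℝ :=
  fun i => if h : (i : ℕ) < k then x ⟨i, h⟩ else 0

/-- `MajorizedBy x y` means `x ≺ y`. -/
def MajorizedBy {m : ℕ} (x y : Fin m → ℝ) : Prop :=
  (∀ j : Fin m, ∑ i ∈ Finset.Iic j, sortDesc x i ≤ ∑ i ∈ Finset.Iic j, sortDesc y i) ∧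
    ∑ i, x i = ∑ i, y i

/-- Majorization of vectors of possibly different lengths, padding with zeros. -/
def MajorizedByPad {k m : ℕ} (x : Fin k → ℝ) (y : Fin m → ℝ) : Prop :=
  MajorizedBy (pad x (max k m)) (pad y (max k m))

/-- The frame operator `S_F = ∑ f_i f_i^*` of a finite sequence of vectors in `ℂ^d`. -/
noncomputable def frameOp {d n : ℕ} (F : Fin n → Fin d → ℂ) : Matrix (Fin d) (Fin d) ℂ :=
  ∑ l, Matrix.vecMulVec (F l) (star (F l))

/-- The squared norm `‖g‖²` of a vector in `ℂ^d`. -/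
noncomputable def normSqVec {d : ℕ} (g : Fin d → ℂ) : ℝ :=
  ∑ i, Complex.normSq (g i)

open scoped Classical in
/-- Eigenvalues of a (Hermitian) matrix arranged in decreasing order. -/
noncomputable def eigsDesc {d : ℕ} (S : Matrix (Fin d) (Fin d) ℂ) : Fin d → ℝ :=
  if h : S.IsHermitian then sortDesc h.eigenvalues else 0

open scoped Classical in
/-- Eigenvalues of a (Hermitian) matrix arranged in increasing order. -/
noncomputable def eigsAsc {d : ℕ} (S : Matrix (Fin d) (Fin d) ℂ) : Fin d → ℝ :=
  if h : S.IsHermitian then sortAsc h.eigenvalues else 0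

/-- `Γ_d(a)`: non-increasing nonnegative vectors in `ℝ^d` majorizing `a`. -/
def Gamma {k : ℕ} (d : ℕ) (a : Fin k → ℝ) : Set (Fin d → ℝ) :=
  {μ | Antitone μ ∧ (∀ i, 0 ≤ μ i) ∧ MajorizedByPad a μ}

/-- The convex potential `P_f = tr f(S) = ∑ f(λ_i(S))`. -/
noncomputable def potential {d : ℕ} (f : ℝ → ℝ) (S : Matrix (Fin d) (Fin d) ℂ) : ℝ :=
  ∑ i, f (eigsDesc S i)

/-- Final averages `Q_{j,r} = (1/(r-j)) (∑_{i=j+1}^k a_i + ∑_{i=j+1}^r λ_i)` (1-based). -/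
noncomputable def finalAvg {d k : ℕ} (lam : Fin d → ℝ) (a : Fin k → ℝ) (j r : ℕ) : ℝ :=
  ((∑ i : Fin k, if j ≤ (i : ℕ) then a i else 0) +
      (∑ i : Fin d, if j ≤ (i : ℕ) ∧ (i : ℕ) < r then lam i else 0)) / ((r : ℝ) - (j : ℝ))

/-- Initial averages: `initAvg lam a lo hi = P_{lo+1,hi}` (1-based), i.e. the average of
`h_i = λ_i + a_i` over the (0-based) index window `[lo, hi)`. -/
noncomputable def initAvg {d k : ℕ} (lam : Fin d → ℝ) (a : Fin k → ℝ) (lo hi : ℕ) : ℝ :=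
  ((∑ i : Fin d, if lo ≤ (i : ℕ) ∧ (i : ℕ) < hi then lam i else 0) +
      (∑ i : Fin k, if lo ≤ (i : ℕ) ∧ (i : ℕ) < hi then a i else 0)) / ((hi : ℝ) - (lo : ℝ))

/-- 1-based access to a vector indexed by `Fin d`. -/
noncomputable def get1 {d : ℕ} (lam : Fin d → ℝ) (i : ℕ) : ℝ :=
  if h : i - 1 < d then lam ⟨i - 1, h⟩ else 0

/-- The index `s` is feasible for the pair `(λ, a)`: the unique vector
`ν_s = (c·1_{r-s}, λ_{r+1},…,λ_d)` determined by the truncated data satisfies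
`a^s ≺ ν_s - λ^s`. -/
def FeasibleIdx {d k : ℕ} (lam : Fin d → ℝ) (a : Fin k → ℝ) (s : ℕ) : Prop :=
  ∃ r : ℕ, ∃ c : ℝ, s < r ∧ r ≤ d ∧ 0 < c ∧
    (∀ i : Fin d, s ≤ (i : ℕ) → (i : ℕ) < r → lam i ≤ c) ∧
    (∀ hrd : r < d, c ≤ lam ⟨r, hrd⟩) ∧
    ((r : ℝ) - (s : ℝ)) * c =
      (∑ i : Fin d, if s ≤ (i : ℕ) ∧ (i : ℕ) < r then lam i else 0) +
        (∑ i : Fin k, if s ≤ (i : ℕ) then a i else 0) ∧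
    MajorizedByPad (fun i : Fin (k - s) => a ⟨s + (i : ℕ), by have := i.isLt; omega⟩)
      (fun i : Fin (d - s) =>
        if s + (i : ℕ) < r then c - lam ⟨s + (i : ℕ), by have := i.isLt; omega⟩ else 0)

/-! ### Sorting -/

lemma sortDesc_antitone {m : ℕ} (x : Fin m → ℝ) : Antitone (sortDesc x) := by
  intro i j h
  exact Tuple.monotone_sort x (Fin.rev_le_rev.mpr h)

lemma sortDesc_perm {m : ℕ} (x : Fin m → ℝ) (σ : Equiv.Perm (Fin m)) :
    sortDesc (x ∘ σ) = sortDesc x := by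
  unfold sortDesc
  rw [Tuple.comp_perm_comp_sort_eq_comp_sort]

lemma sortDesc_exists_perm {m : ℕ} (x : Fin m → ℝ) :
    ∃ σ : Equiv.Perm (Fin m), sortDesc x = x ∘ σ :=
  ⟨Fin.revPerm.trans (Tuple.sort x), by ext i; simp [sortDesc]⟩

lemma sortDesc_of_antitone {m : ℕ} {x : Fin m → ℝ} (h : Antitone x) : sortDesc x = x := by
  obtain ⟨σ, hσ⟩ := sortDesc_exists_perm x
  have h1 : Antitone (x ∘ σ) := hσ ▸ sortDesc_antitone x
  rw [hσ]
  have := Tuple.unique_antitone (f := x) (σ := σ) (τ := Equiv.refl _) h1 (by simpa using h)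
  simpa using this

lemma sortDesc_eq_of_multiset {m : ℕ} {x y : Fin m → ℝ}
    (h : Multiset.map x Finset.univ.val = Multiset.map y Finset.univ.val) :
    sortDesc x = sortDesc y := by
  have key : ∀ z : Fin m → ℝ, (List.ofFn (sortDesc z)).Perm (List.ofFn z) := by
    intro z
    obtain ⟨σ, hσ⟩ := sortDesc_exists_perm z
    rw [hσ]
    exact Equiv.Perm.ofFn_comp_perm σ z
  have hxy : (List.ofFn x).Perm (List.ofFn y) := by
    simpa [Fin.univ_val_map] using h
  apply List.ofFn_injective
  exact List.Perm.eq_of_pairwise' (r := (· ≥ ·)) (sortDesc_antitone x).sortedGE_ofFn.pairwise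
    (sortDesc_antitone y).sortedGE_ofFn.pairwise ((key x).trans (hxy.trans (key y).symm))

lemma pad_antitone {k : ℕ} {x : Fin k → ℝ} (h : Antitone x) (h0 : ∀ i, 0 ≤ x i) (m : ℕ) :
    Antitone (pad x m) := by
  intro i j hij
  have hij' : (i : ℕ) ≤ j := hij
  unfold pad
  by_cases hj : (j : ℕ) < k
  · rw [dif_pos hj, dif_pos (by omega)]
    exact h (by simpa using hij')
  · rw [dif_neg hj]
    split_ifs
    · exact h0 _
    · exact le_rfl

lemma majorizedByPad_iff {k d : ℕ} {a : Fin k → ℝ} {μ : Fin d → ℝ} (ha : Antitone a)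
    (ha0 : ∀ i, 0 ≤ a i) (hμ : Antitone μ) (hμ0 : ∀ i, 0 ≤ μ i) :
    MajorizedByPad a μ ↔
      (∀ j : Fin (max k d), ∑ i ∈ Finset.Iic j, pad a (max k d) i
          ≤ ∑ i ∈ Finset.Iic j, pad μ (max k d) i) ∧
        ∑ i, pad a (max k d) i = ∑ i, pad μ (max k d) i := by
  unfold MajorizedByPad MajorizedBy
  rw [sortDesc_of_antitone (pad_antitone ha ha0 _), sortDesc_of_antitone (pad_antitone hμ hμ0 _)]

lemma pad_sum_filter {k N : ℕ} (hk : k ≤ N) (x : Fin k → ℝ) (j : Fin N) :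
    ∑ i ∈ Finset.Iic j, pad x N i = ∑ l : Fin k, if (l : ℕ) ≤ j then x l else 0 := by
  obtain ⟨c, rfl⟩ := Nat.exists_eq_add_of_le hk
  have : ∑ i ∈ Finset.Iic j, pad x (k + c) i
      = ∑ i : Fin (k + c), if (i : ℕ) ≤ j then pad x (k + c) i else 0 := by
    rw [← Finset.sum_filter]
    have hset : Finset.Iic j = Finset.univ.filter fun i : Fin (k + c) => (i : ℕ) ≤ j := by
      ext i
      rw [Finset.mem_Iic, Finset.mem_filter]
      exact ⟨fun h => ⟨Finset.mem_univ i, h⟩, fun h => h.2⟩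
    rw [hset]
  rw [this, Fin.sum_univ_add]
  simp [pad]

lemma pad_sum {k N : ℕ} (hk : k ≤ N) (x : Fin k → ℝ) :
    ∑ i, pad x N i = ∑ l : Fin k, x l := by
  obtain ⟨c, rfl⟩ := Nat.exists_eq_add_of_le hk
  rw [Fin.sum_univ_add]
  simp [pad]

lemma Gamma_eq {k d : ℕ} {a : Fin k → ℝ} (ha : Antitone a) (ha0 : ∀ i, 0 ≤ a i) :
    Gamma d a = {μ | Antitone μ ∧ (∀ i, 0 ≤ μ i) ∧
      (∀ j : Fin (max k d), (∑ l : Fin k, if (l : ℕ) ≤ j then a l else 0)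
          ≤ ∑ l : Fin d, if (l : ℕ) ≤ j then μ l else 0) ∧ ∑ l, a l = ∑ l, μ l} := by
  ext μ
  simp only [Gamma, Set.mem_setOf_eq]
  refine and_congr_right fun h1 => and_congr_right fun h2 => ?_
  rw [majorizedByPad_iff ha ha0 h1 h2, pad_sum (le_max_left _ _), pad_sum (le_max_right _ _)]
  simp_rw [pad_sum_filter (le_max_left k d), pad_sum_filter (le_max_right k d)]

lemma Gamma_isClosed {k d : ℕ} {a : Fin k → ℝ} (ha : Antitone a) (ha0 : ∀ i, 0 ≤ a i) :
    IsClosed (Gamma d a) := by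
  rw [Gamma_eq ha ha0]
  simp only [Antitone, Set.setOf_and, Set.setOf_forall]
  refine IsClosed.inter ?_ (IsClosed.inter ?_ (IsClosed.inter ?_ ?_))
  · refine isClosed_iInter fun i => isClosed_iInter fun j => isClosed_iInter fun _ => ?_
    exact isClosed_le (by fun_prop) (by fun_prop)
  · exact isClosed_iInter fun i => isClosed_le (by fun_prop) (by fun_prop)
  · refine isClosed_iInter fun j => isClosed_le (by fun_prop) ?_
    refine continuous_finsetSum _ fun l _ => ?_
    split_ifs <;> fun_prop
  · exact isClosed_eq (by fun_prop) (by fun_prop)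

lemma Gamma_isCompact {k d : ℕ} {a : Fin k → ℝ} (ha : Antitone a) (ha0 : ∀ i, 0 ≤ a i) :
    IsCompact (Gamma d a) := by
  refine IsCompact.of_isClosed_subset (isCompact_Icc (a := (0 : Fin d → ℝ))
    (b := fun _ => ∑ l, a l)) (Gamma_isClosed ha ha0) ?_
  rw [Gamma_eq ha ha0]
  rintro μ ⟨_, h2, _, h4⟩
  refine ⟨h2, fun i => ?_⟩
  simp only [h4]
  exact Finset.single_le_sum (f := μ) (fun i _ => h2 i) (Finset.mem_univ i)

lemma Gamma_convex {k d : ℕ} {a : Fin k → ℝ} (ha : Antitone a) (ha0 : ∀ i, 0 ≤ a i) :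
    Convex ℝ (Gamma d a) := by
  rw [Gamma_eq ha ha0]
  rintro x ⟨x1, x2, x3, x4⟩ y ⟨y1, y2, y3, y4⟩ s t hs ht hst
  have e : ∀ z : ℝ, z = s * z + t * z := fun z => by rw [← add_mul, hst, one_mul]
  refine ⟨fun i j hij => ?_, fun i => ?_, fun j => ?_, ?_⟩
  · have := mul_le_mul_of_nonneg_left (x1 hij) hs
    have := mul_le_mul_of_nonneg_left (y1 hij) ht
    simp only [Pi.add_apply, Pi.smul_apply, smul_eq_mul]
    linarith
  · have := mul_nonneg hs (x2 i)
    have := mul_nonneg ht (y2 i)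
    simp only [Pi.add_apply, Pi.smul_apply, smul_eq_mul]
    linarith
  · have h1 := mul_le_mul_of_nonneg_left (x3 j) hs
    have h2 := mul_le_mul_of_nonneg_left (y3 j) ht
    rw [e (∑ l : Fin k, if (l : ℕ) ≤ j then a l else 0)]
    refine (add_le_add h1 h2).trans (le_of_eq ?_)
    rw [Finset.mul_sum, Finset.mul_sum, ← Finset.sum_add_distrib]
    refine Finset.sum_congr rfl fun l _ => ?_
    split_ifs <;> simp
  · rw [e (∑ l, a l)]
    nth_rewrite 1 [x4]
    rw [y4, Finset.mul_sum, Finset.mul_sum, ← Finset.sum_add_distrib]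
    rfl

/-! ### Combinatorial majorization induction -/

def transferVec {N : ℕ} (b : Fin N → ℝ) (p q : Fin N) (δ : ℝ) : Fin N → ℝ :=
  fun l => b l - (if l = p then δ else 0) + (if l = q then δ else 0)

lemma hlp {N : ℕ} (P : (Fin N → ℝ) → Prop)
    (hP : ∀ b, P b → ∀ p q, p ≠ q → ∀ δ, 0 ≤ δ → b q ≤ b p - δ → P (transferVec b p q δ))
    (a : Fin N → ℝ) (ha : Antitone a) :
    ∀ n : ℕ, ∀ b : Fin N → ℝ, (Finset.univ.filter fun l => a l ≠ b l).card ≤ n → P b →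
      (∀ j, ∑ i ∈ Finset.Iic j, a i ≤ ∑ i ∈ Finset.Iic j, b i) →
      ∑ i, a i = ∑ i, b i → P a := by
  intro n
  induction n with
  | zero =>
    intro b hb hPb _ _
    have : a = b := by
      ext l
      by_contra hl
      have : l ∈ (Finset.univ.filter fun l => a l ≠ b l) := by simp [hl]
      rw [Finset.card_eq_zero.mp (Nat.le_zero.mp hb)] at this
      simp at this
    rwa [this]
  | succ n ih =>
    intro b hb hPb hmaj hsum
    by_cases hex : ∃ q, b q < a q
    swap
    · push Not at hex
      have : a = b := by
        ext l
        exact (Finset.sum_eq_sum_iff_of_le (fun i _ => hex i)).mp hsum l (Finset.mem_univ l)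
      rwa [this]
    obtain ⟨q, hq, hmin⟩ : ∃ q, b q < a q ∧ ∀ l, l < q → a l ≤ b l := by
      have hne : (Finset.univ.filter fun q => b q < a q).Nonempty := by
        obtain ⟨q, hq⟩ := hex
        exact ⟨q, by simp [hq]⟩
      refine ⟨_, (Finset.mem_filter.mp (Finset.min'_mem _ hne)).2, fun l hl => ?_⟩
      by_contra hcon
      push Not at hcon
      exact absurd (Finset.min'_le _ l (by simp [hcon])) (not_le.mpr hl)
    obtain ⟨p, hpq, hp⟩ : ∃ p, p < q ∧ a p < b p := by
      by_contra hcon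
      push Not at hcon
      refine absurd (hmaj q) (not_le.mpr ?_)
      refine Finset.sum_lt_sum (fun i hi => ?_) ⟨q, by simp, hq⟩
      rcases (Finset.mem_Iic.mp hi).lt_or_eq with h | h
      · exact hcon i h
      · rw [h]; exact hq.le
    have hapq : a q ≤ a p := ha hpq.le
    set δ := min (b p - a p) (a q - b q) with hδ
    have hδ1 : δ ≤ b p - a p := min_le_left _ _
    have hδ2 : δ ≤ a q - b q := min_le_right _ _
    have hδ0 : 0 < δ := lt_min (by linarith) (by linarith)
    have hne : p ≠ q := hpq.ne
    refine ih (transferVec b p q δ) ?_ (hP b hPb p q hne δ hδ0.le (by linarith)) ?_ ?_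
    · refine Nat.lt_succ_iff.mp (lt_of_lt_of_le (Finset.card_lt_card ?_) hb)
      refine Finset.ssubset_iff_of_subset ?_ |>.mpr ?_
      · intro l hl
        simp only [Finset.mem_filter, Finset.mem_univ, true_and] at hl ⊢
        by_cases h1 : l = p
        · rw [h1]; exact hp.ne
        · by_cases h2 : l = q
          · rw [h2]; exact hq.ne'
          · simpa [transferVec, h1, h2] using hl
      · rcases min_choice (b p - a p) (a q - b q) with h | h
        · refine ⟨p, by simp [hp.ne], ?_⟩
          intro hmem
          refine (Finset.mem_filter.mp hmem).2 ?_
          simp only [transferVec, if_true, if_neg hne]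
          rw [hδ, h]; ring
        · refine ⟨q, by simp [hq.ne'], ?_⟩
          intro hmem
          refine (Finset.mem_filter.mp hmem).2 ?_
          simp only [transferVec, if_true, if_neg hne.symm]
          rw [hδ, h]; ring
    · intro j
      have hs : ∑ i ∈ Finset.Iic j, transferVec b p q δ i = ∑ i ∈ Finset.Iic j, b i
          - (if p ≤ j then δ else 0) + (if q ≤ j then δ else 0) := by
        simp [transferVec, Finset.sum_add_distrib, Finset.sum_sub_distrib]
      rw [hs]
      have := hmaj j
      by_cases hqj : q ≤ j
      · rw [if_pos hqj, if_pos (hpq.le.trans hqj)]; linarith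
      · rw [if_neg hqj]
        by_cases hpj : p ≤ j
        · rw [if_pos hpj]
          have h1 : b p - a p ≤ ∑ i ∈ Finset.Iic j, (b i - a i) :=
            Finset.single_le_sum (f := fun i => b i - a i)
              (fun i hi => sub_nonneg.mpr (hmin i
                (lt_of_le_of_lt (Finset.mem_Iic.mp hi) (not_le.mp hqj))))
              (Finset.mem_Iic.mpr hpj)
          rw [Finset.sum_sub_distrib] at h1
          linarith
        · rw [if_neg hpj]; linarith
    · rw [hsum]
      simp [transferVec, Finset.sum_add_distrib, Finset.sum_sub_distrib]

/-! ### Rotation step -/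

lemma normSqVec_continuous_rot {d : ℕ} (u v : Fin d → ℂ) :
    Continuous fun θ : ℝ => normSqVec fun l => (Real.cos θ : ℂ) * u l + (Real.sin θ : ℂ) * v l := by
  unfold normSqVec
  refine continuous_finsetSum _ fun l _ => Complex.continuous_normSq.comp ?_
  fun_prop

lemma rot_step {d N : ℕ} (g : Fin N → Fin d → ℂ) (p q : Fin N) (hpq : p ≠ q) (δ : ℝ)
    (h0 : 0 ≤ δ) (h1 : normSqVec (g q) ≤ normSqVec (g p) - δ) :
    ∃ g' : Fin N → Fin d → ℂ, frameOp g' = frameOp g ∧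
      (fun l => normSqVec (g' l)) = transferVec (fun l => normSqVec (g l)) p q δ := by
  have hivt := intermediate_value_Icc' (a := 0) (b := Real.pi / 2) (by positivity)
    (normSqVec_continuous_rot (g p) (g q)).continuousOn
  obtain ⟨θ, -, hθ⟩ := hivt (show normSqVec (g p) - δ ∈ _ by
    constructor
    · simpa using h1
    · simpa using h0)
  have hcs := Real.sin_sq_add_cos_sq θ
  have hcsC : (Real.sin θ : ℂ) ^ 2 + (Real.cos θ : ℂ) ^ 2 = 1 := by exact_mod_cast hcs
  set c := Real.cos θ
  set s := Real.sin θ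
  simp only at hθ
  let up : Fin d → ℂ := fun l => (c : ℂ) * g p l + (s : ℂ) * g q l
  let uq : Fin d → ℂ := fun l => -(s : ℂ) * g p l + (c : ℂ) * g q l
  have hup : normSqVec up = normSqVec (g p) - δ := hθ
  have huq : normSqVec uq = normSqVec (g q) + δ := by
    have : normSqVec up + normSqVec uq = normSqVec (g p) + normSqVec (g q) := by
      unfold normSqVec
      rw [← Finset.sum_add_distrib, ← Finset.sum_add_distrib]
      refine Finset.sum_congr rfl fun l _ => ?_
      simp only [up, uq, Complex.normSq_apply, Complex.add_re, Complex.add_im, Complex.mul_re,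
        Complex.mul_im, Complex.neg_re, Complex.neg_im, Complex.ofReal_re, Complex.ofReal_im]
      linear_combination ((g p l).re ^ 2 + (g p l).im ^ 2 + (g q l).re ^ 2 + (g q l).im ^ 2) * hcs
    linarith
  refine ⟨fun l => if l = p then up else if l = q then uq else g l, ?_, ?_⟩
  · rw [← sub_eq_zero]
    unfold frameOp
    rw [← Finset.sum_sub_distrib, Fintype.sum_eq_add p q hpq]
    · simp only [if_true, if_neg hpq.symm]
      ext x y
      simp only [Matrix.add_apply, Matrix.sub_apply, Matrix.vecMulVec_apply, Pi.star_apply,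
        Matrix.zero_apply, up, uq, star_add, star_mul', star_neg, Complex.star_def,
        Complex.conj_ofReal]
      linear_combination (g p x * (starRingEnd ℂ) (g p y) + g q x * (starRingEnd ℂ) (g q y)) * hcsC
    · rintro l ⟨hl1, hl2⟩
      simp [hl1, hl2]
  · ext l
    simp only [transferVec]
    by_cases hl1 : l = p
    · subst hl1
      simp [hpq, hup]
    · by_cases hl2 : l = q
      · subst hl2
        simp [hl1, huq]
      · simp [hl1, hl2]

/-- Horn direction: a sequence whose norms majorize `a` can be rotated into one with norms `a`. -/
lemma horn {d k : ℕ} (a : Fin k → ℝ) (ha : Antitone a) (ha0 : ∀ i, 0 ≤ a i)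
    (μ : Fin d → ℝ) (hμ : Antitone μ) (hμ0 : ∀ i, 0 ≤ μ i) (hmaj : MajorizedByPad a μ)
    (g : Fin d → Fin d → ℂ) (hg : ∀ i, normSqVec (g i) = μ i) :
    ∃ G : Fin k → Fin d → ℂ, frameOp G = frameOp g ∧ ∀ i, normSqVec (G i) = a i := by
  rw [majorizedByPad_iff ha ha0 hμ hμ0] at hmaj
  obtain ⟨N, hN, hkN, hdN⟩ : ∃ N, N = max k d ∧ k ≤ N ∧ d ≤ N :=
    ⟨_, rfl, le_max_left _ _, le_max_right _ _⟩
  rw [← hN] at hmaj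
  clear hN
  have key := hlp (N := N) (fun b => ∃ h : Fin N → Fin d → ℂ, frameOp h = frameOp g ∧
      (fun l => normSqVec (h l)) = b) ?_ (pad a N) (pad_antitone ha ha0 N) _ (pad μ N) le_rfl
      ?_ hmaj.1 hmaj.2
  · obtain ⟨h, h1, h2⟩ := key
    obtain ⟨c, rfl⟩ := Nat.exists_eq_add_of_le hkN
    refine ⟨fun i => h (Fin.castAdd c i), ?_, fun i => ?_⟩
    · rw [← h1]
      unfold frameOp
      rw [Fin.sum_univ_add]
      refine (left_eq_add.mpr ?_)
      refine Finset.sum_eq_zero fun i _ => ?_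
      have h3 := congrFun h2 (Fin.natAdd k i)
      simp only [pad, Fin.val_natAdd, add_lt_iff_neg_left, not_lt_zero', dite_false] at h3
      have h4 : h (Fin.natAdd k i) = 0 := by
        ext l
        unfold normSqVec at h3
        rw [Finset.sum_eq_zero_iff_of_nonneg (fun i _ => Complex.normSq_nonneg _)] at h3
        simpa using h3 l (Finset.mem_univ l)
      simp [h4]
    · have h3 := congrFun h2 (Fin.castAdd c i)
      simpa [pad] using h3
  · rintro b ⟨h, h1, rfl⟩ p q hpq δ hδ hle
    obtain ⟨h', e1, e2⟩ := rot_step h p q hpq δ hδ hle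
    exact ⟨h', e1.trans h1, e2⟩
  · refine ⟨fun i => if hi : (i : ℕ) < d then g ⟨i, hi⟩ else 0, ?_, ?_⟩
    · obtain ⟨c, rfl⟩ := Nat.exists_eq_add_of_le hdN
      unfold frameOp
      rw [Fin.sum_univ_add]
      simp
    · ext i
      unfold pad
      by_cases hi : (i : ℕ) < d
      · simp [hi, hg]
      · simp [hi, normSqVec]

/-! ### Frame operators and spectra -/

lemma frameOp_posSemidef {d n : ℕ} (F : Fin n → Fin d → ℂ) : (frameOp F).PosSemidef :=
  Matrix.posSemidef_sum _ fun i _ => Matrix.posSemidef_vecMulVec_self_star (F i)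

open scoped Matrix in
lemma frameOp_eq_mul {d n : ℕ} (F : Fin n → Fin d → ℂ) :
    frameOp F = (Matrix.of F)ᵀ * ((Matrix.of F)ᵀ)ᴴ := by
  ext i j
  simp [frameOp, Matrix.sum_apply, Matrix.vecMulVec_apply, Matrix.mul_apply]

lemma eigsDesc_of_conj {d : ℕ} (U : Matrix.unitaryGroup (Fin d) ℂ) (v : Fin d → ℝ)
    (S : Matrix (Fin d) (Fin d) ℂ) (hS : S.IsHermitian)
    (h : S = (U : Matrix (Fin d) (Fin d) ℂ) * Matrix.diagonal (fun i => (v i : ℂ)) *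
      star (U : Matrix (Fin d) (Fin d) ℂ)) :
    eigsDesc S = sortDesc v := by
  have h1 : S.charpoly = ∏ i, (Polynomial.X - Polynomial.C (v i : ℂ)) := by
    rw [h, Matrix.charpoly_mul_comm, ← mul_assoc]
    simp [Matrix.charpoly_diagonal]
  have h2 := hS.roots_charpoly_eq_eigenvalues
  rw [h1, Polynomial.roots_prod _ _ (by
    simp [Finset.prod_ne_zero_iff, Polynomial.X_sub_C_ne_zero])] at h2
  have h3 : Multiset.map v Finset.univ.val = Multiset.map hS.eigenvalues Finset.univ.val := by
    have := congrArg (Multiset.map Complex.re) h2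
    simpa [Function.comp_def] using this
  unfold eigsDesc
  rw [dif_pos hS]
  exact (sortDesc_eq_of_multiset h3).symm

lemma spectral_form {d : ℕ} {S : Matrix (Fin d) (Fin d) ℂ} (hS : S.IsHermitian) :
    S = (hS.eigenvectorUnitary : Matrix (Fin d) (Fin d) ℂ) *
      Matrix.diagonal (fun i => (hS.eigenvalues i : ℂ)) *
      star (hS.eigenvectorUnitary : Matrix (Fin d) (Fin d) ℂ) := by
  have := hS.spectral_theorem
  rw [Unitary.conjStarAlgAut_apply] at this
  exact this

/-! ### The Schur direction -/

open scoped Matrix in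
lemma schur_col {d k : ℕ} (Z : Matrix (Fin d) (Fin k) ℂ) (e : Fin d → ℝ)
    (he : Z * Zᴴ = Matrix.diagonal fun l => (e l : ℂ)) (l : Fin d) :
    ∑ i, Complex.normSq (Z l i) = e l := by
  have h := congrFun (congrFun he l) l
  simp only [Matrix.mul_apply, Matrix.conjTranspose_apply, Matrix.diagonal_apply_eq,
    Complex.star_def, Complex.mul_conj] at h
  exact_mod_cast h

open scoped Matrix in
lemma schur_row {d k : ℕ} (Z : Matrix (Fin d) (Fin k) ℂ) (e : Fin d → ℝ)
    (he : Z * Zᴴ = Matrix.diagonal fun l => (e l : ℂ)) (i : Fin k) :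
    ∑ l, Complex.normSq (Z l i) / e l ≤ 1 := by
  let D' : Matrix (Fin d) (Fin d) ℂ := Matrix.diagonal fun l => ((e l)⁻¹ : ℂ)
  let P : Matrix (Fin k) (Fin k) ℂ := Zᴴ * D' * Z
  have hDD : D' * (Matrix.diagonal fun l => (e l : ℂ)) * D' = D' := by
    simp only [D', Matrix.diagonal_mul_diagonal]
    congr 1
    ext l
    by_cases h : (e l : ℂ) = 0
    · simp [h]
    · field_simp
  have hD' : D'ᴴ = D' := by
    simp only [D', Matrix.diagonal_conjTranspose]
    congr 1
    ext l
    simp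
  have hPH : Pᴴ = P := by
    simp only [P, Matrix.conjTranspose_mul, Matrix.conjTranspose_conjTranspose, hD',
      Matrix.mul_assoc]
  have hPP : P * Pᴴ = P := by
    rw [hPH]
    calc P * P = Zᴴ * (D' * (Z * Zᴴ) * D') * Z := by simp only [P, Matrix.mul_assoc]
      _ = P := by rw [he, hDD]
  have ht : P i i = ((∑ l, Complex.normSq (Z l i) / e l : ℝ) : ℂ) := by
    change (Zᴴ * D' * Z) i i = _
    rw [Matrix.mul_apply]
    simp only [D', Matrix.mul_diagonal, Matrix.conjTranspose_apply]
    push_cast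
    refine Finset.sum_congr rfl fun l _ => ?_
    rw [← Complex.mul_conj, Complex.star_def]
    ring
  set t := ∑ l, Complex.normSq (Z l i) / e l
  have h1 : ∑ j, Complex.normSq (P i j) = t := by
    have h := congrFun (congrFun hPP i) i
    rw [ht] at h
    simp only [Matrix.mul_apply, Matrix.conjTranspose_apply, Complex.star_def,
      Complex.mul_conj] at h
    exact_mod_cast h
  have h2 : Complex.normSq (P i i) ≤ t := by
    rw [← h1]
    exact Finset.single_le_sum (f := fun j => Complex.normSq (P i j))
      (fun j _ => Complex.normSq_nonneg _) (Finset.mem_univ i)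
  rw [ht, Complex.normSq_ofReal] at h2
  nlinarith

lemma weighted_le {d : ℕ} (μ c : Fin d → ℝ) (hμ : Antitone μ) (hμ0 : ∀ i, 0 ≤ μ i)
    (hc0 : ∀ i, 0 ≤ c i) (hc1 : ∀ i, c i ≤ 1) (j : ℕ) (hc : ∑ i, c i ≤ j + 1) :
    ∑ i, c i * μ i ≤ ∑ i : Fin d, if (i : ℕ) ≤ j then μ i else 0 := by
  by_cases hj : j < d
  · set t := μ ⟨j, hj⟩ with ht
    have hcard : ∑ i : Fin d, (if (i : ℕ) ≤ j then (1 : ℝ) else 0) = j + 1 := by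
      rw [Finset.sum_boole]
      have : (Finset.univ.filter fun i : Fin d => (i : ℕ) ≤ j) = Finset.Iic ⟨j, hj⟩ := by
        ext i; simp [Fin.le_def]
      rw [this, Fin.card_Iic]
      push_cast
      rfl
    have hterm : ∀ i : Fin d, c i * μ i ≤ (if (i : ℕ) ≤ j then μ i else 0)
        + t * (c i - (if (i : ℕ) ≤ j then (1 : ℝ) else 0)) := by
      intro i
      split_ifs with h
      · have : t ≤ μ i := hμ (Fin.le_def.mpr h)
        nlinarith [hc1 i]
      · have : μ i ≤ t := hμ (Fin.le_def.mpr (by simp; omega))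
        nlinarith [hc0 i]
    refine (Finset.sum_le_sum fun i _ => hterm i).trans ?_
    rw [Finset.sum_add_distrib, ← Finset.mul_sum, Finset.sum_sub_distrib, hcard]
    nlinarith [hμ0 ⟨j, hj⟩]
  · refine Finset.sum_le_sum fun i _ => ?_
    rw [if_pos (by omega)]
    nlinarith [hc1 i, hμ0 i]

open scoped Matrix in
lemma eigsDesc_mem_Gamma {d k : ℕ} (G : Fin k → Fin d → ℂ) (a : Fin k → ℝ) (ha : Antitone a)
    (ha0 : ∀ i, 0 ≤ a i) (hG : ∀ i, normSqVec (G i) = a i) :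
    eigsDesc (frameOp G) ∈ Gamma d a := by
  have hpos := frameOp_posSemidef G
  have hS := hpos.isHermitian
  obtain ⟨τ, hτ⟩ := sortDesc_exists_perm hS.eigenvalues
  have hE : eigsDesc (frameOp G) = sortDesc hS.eigenvalues := by
    unfold eigsDesc; rw [dif_pos hS]
  have hanti : Antitone (eigsDesc (frameOp G)) := hE ▸ sortDesc_antitone _
  have hEτ : ∀ l, eigsDesc (frameOp G) l = hS.eigenvalues (τ l) := fun l => by rw [hE, hτ]; rfl
  have hnn : ∀ l, 0 ≤ eigsDesc (frameOp G) l := fun l => by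
    rw [hEτ]; exact hpos.eigenvalues_nonneg _
  generalize eigsDesc (frameOp G) = μ at *
  let U : Matrix (Fin d) (Fin d) ℂ := hS.eigenvectorUnitary
  have hUU : Uᴴ * U = 1 := Unitary.coe_star_mul_self hS.eigenvectorUnitary
  have hUU' : U * Uᴴ = 1 := Unitary.coe_mul_star_self hS.eigenvectorUnitary
  let Y : Matrix (Fin d) (Fin k) ℂ := (Matrix.of G)ᵀ
  let Z : Matrix (Fin d) (Fin k) ℂ := Uᴴ * Y
  have hZ : Z * Zᴴ = Matrix.diagonal fun l => (hS.eigenvalues l : ℂ) := by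
    have h1 : Z * Zᴴ = Uᴴ * (Y * Yᴴ) * U := by
      simp only [Z, Matrix.conjTranspose_mul, Matrix.conjTranspose_conjTranspose, Matrix.mul_assoc]
    have h2 : Y * Yᴴ = U * (Matrix.diagonal fun l => (hS.eigenvalues l : ℂ)) * Uᴴ := by
      rw [← frameOp_eq_mul]; exact spectral_form hS
    rw [h1, h2]
    calc _ = (Uᴴ * U) * (Matrix.diagonal fun l => (hS.eigenvalues l : ℂ)) * (Uᴴ * U) := by
          simp only [Matrix.mul_assoc]
      _ = _ := by rw [hUU]; simp
  have hZY : Zᴴ * Z = Yᴴ * Y := by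
    calc Zᴴ * Z = Yᴴ * (U * Uᴴ) * Y := by
          simp only [Z, Matrix.conjTranspose_mul, Matrix.conjTranspose_conjTranspose,
            Matrix.mul_assoc]
      _ = _ := by rw [hUU']; simp
  have hrow : ∀ i, ∑ l, Complex.normSq (Z l i) = a i := by
    intro i
    have h := congrFun (congrFun hZY i) i
    simp only [Matrix.mul_apply, Matrix.conjTranspose_apply, Complex.star_def,
      ← Complex.normSq_eq_conj_mul_self] at h
    rw [← hG i]
    unfold normSqVec
    exact_mod_cast h
  have hcol := schur_col Z _ hZ
  have hbd := schur_row Z _ hZ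
  rw [Gamma_eq ha ha0]
  refine ⟨hanti, hnn, fun j => ?_, ?_⟩
  · let c : Fin d → ℝ := fun l =>
      ∑ i : Fin k, if (i : ℕ) ≤ j then Complex.normSq (Z (τ l) i) / hS.eigenvalues (τ l) else 0
    have hle : ∀ l i, 0 ≤ Complex.normSq (Z l i) / hS.eigenvalues l := fun l i =>
      div_nonneg (Complex.normSq_nonneg _) (hpos.eigenvalues_nonneg _)
    have hw := weighted_le μ c hanti hnn ?_ ?_ j ?_
    · refine le_trans (le_of_eq ?_) hw
      simp only [c, hEτ, Finset.sum_mul]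
      rw [Finset.sum_comm]
      refine Finset.sum_congr rfl fun i _ => ?_
      split_ifs with h
      · rw [← hrow i, ← Equiv.sum_comp τ]
        refine Finset.sum_congr rfl fun l _ => ?_
        by_cases h0 : hS.eigenvalues (τ l) = 0
        · have h3 := hcol (τ l)
          rw [h0, Finset.sum_eq_zero_iff_of_nonneg (fun _ _ => Complex.normSq_nonneg _)] at h3
          rw [h3 i (Finset.mem_univ i)]
          simp
        · field_simp
      · simp
    · intro l
      refine Finset.sum_nonneg fun i _ => ?_
      split_ifs
      · exact hle _ _
      · exact le_rfl
    · intro l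
      calc c l ≤ ∑ i : Fin k, Complex.normSq (Z (τ l) i) / hS.eigenvalues (τ l) := by
            refine Finset.sum_le_sum fun i _ => ?_
            split_ifs
            · exact le_rfl
            · exact hle _ _
        _ = hS.eigenvalues (τ l) / hS.eigenvalues (τ l) := by rw [← Finset.sum_div, hcol]
        _ ≤ 1 := div_self_le_one _
    · simp only [c]
      rw [Finset.sum_comm]
      calc _ ≤ ∑ i : Fin k, (if (i : ℕ) ≤ j then (1 : ℝ) else 0) := by
            refine Finset.sum_le_sum fun i _ => ?_
            split_ifs
            · rw [Equiv.sum_comp τ (fun l => Complex.normSq (Z l i) / hS.eigenvalues l)]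
              exact hbd i
            · simp
        _ ≤ _ := by
            rw [Finset.sum_boole]
            have : (Finset.univ.filter fun i : Fin k => (i : ℕ) ≤ j).card ≤ (j : ℕ) + 1 := by
              rw [← Finset.card_range ((j : ℕ) + 1)]
              refine Finset.card_le_card_of_injOn (fun i => (i : ℕ)) ?_ ?_
              · intro i hi
                simp at hi ⊢
                omega
              · intro x _ y _ h
                exact Fin.ext h
            exact_mod_cast this
  · simp only [hEτ, ← hrow]
    rw [Equiv.sum_comp τ hS.eigenvalues, Finset.sum_comm]
    exact Finset.sum_congr rfl fun l _ => hcol l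

/-! ### Assembling -/

lemma normSqVec_smul_col {d : ℕ} (U : Matrix.unitaryGroup (Fin d) ℂ) (m : Fin d) (r : ℝ)
    (hr : 0 ≤ r) :
    normSqVec (fun x => (Real.sqrt r : ℂ) * (U : Matrix (Fin d) (Fin d) ℂ) x m) = r := by
  have h := congrFun (congrFun (Unitary.coe_star_mul_self U) m) m
  simp only [Matrix.mul_apply, Matrix.star_apply, Complex.star_def,
    ← Complex.normSq_eq_conj_mul_self, Matrix.one_apply_eq] at h
  have h' : ∑ x, Complex.normSq ((U : Matrix (Fin d) (Fin d) ℂ) x m) = 1 := by exact_mod_cast h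
  simp only [normSqVec, Complex.normSq_mul, Complex.normSq_ofReal, Real.mul_self_sqrt hr,
    ← Finset.mul_sum, h', mul_one]

lemma frameOp_smul_col {d : ℕ} (U : Matrix.unitaryGroup (Fin d) ℂ) (σ : Equiv.Perm (Fin d))
    (μ : Fin d → ℝ) (hμ : ∀ i, 0 ≤ μ i) :
    frameOp (fun i x => (Real.sqrt (μ i) : ℂ) * (U : Matrix (Fin d) (Fin d) ℂ) x (σ i)) =
      (U : Matrix (Fin d) (Fin d) ℂ) * Matrix.diagonal (fun i => (μ (σ.symm i) : ℂ)) *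
        star (U : Matrix (Fin d) (Fin d) ℂ) := by
  ext x y
  rw [Matrix.mul_apply]
  simp only [frameOp, Matrix.sum_apply, Matrix.vecMulVec_apply,
    Matrix.mul_diagonal, Pi.star_apply, Matrix.star_apply]
  rw [← Equiv.sum_comp σ (fun j => (U : Matrix (Fin d) (Fin d) ℂ) x j * (μ (σ.symm j) : ℂ) *
    star ((U : Matrix (Fin d) (Fin d) ℂ) y j))]
  refine Finset.sum_congr rfl fun i _ => ?_
  have h : (Real.sqrt (μ i) : ℂ) * (Real.sqrt (μ i) : ℂ) = (μ i : ℂ) := by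
    exact_mod_cast Real.mul_self_sqrt (hμ i)
  simp only [star_mul', Complex.star_def, Complex.conj_ofReal, Equiv.symm_apply_apply]
  rw [← h]
  ring

lemma exists_optimal {d n₀ k : ℕ} (F₀ : Fin n₀ → Fin d → ℂ) (a : Fin k → ℝ)
    (ha : Antitone a) (ha0 : ∀ i, 0 ≤ a i) (μ : Fin d → ℝ) (hμ : μ ∈ Gamma d a) :
    ∃ G : Fin k → Fin d → ℂ, (∀ i, normSqVec (G i) = a i) ∧ eigsDesc (frameOp G) = μ ∧
      eigsDesc (frameOp F₀ + frameOp G) = sortDesc (fun i => eigsAsc (frameOp F₀) i + μ i) := by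
  obtain ⟨h1, h2, h3⟩ := hμ
  have hS := (frameOp_posSemidef F₀).isHermitian
  set σ := Tuple.sort hS.eigenvalues with hσ
  obtain ⟨G, hG1, hG2⟩ := horn a ha ha0 μ h1 h2 h3
    (fun i x => (Real.sqrt (μ i) : ℂ) *
      (hS.eigenvectorUnitary : Matrix (Fin d) (Fin d) ℂ) x (σ i))
    (fun i => normSqVec_smul_col _ _ _ (h2 i))
  rw [frameOp_smul_col _ _ _ h2] at hG1
  have hGH := (frameOp_posSemidef G).isHermitian
  refine ⟨G, hG2, ?_, ?_⟩
  · rw [eigsDesc_of_conj hS.eigenvectorUnitary (fun i => μ (σ.symm i)) _ hGH hG1]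
    have := sortDesc_perm μ σ.symm
    rw [sortDesc_of_antitone h1] at this
    exact this
  · have hA : eigsAsc (frameOp F₀) = hS.eigenvalues ∘ σ := by
      unfold eigsAsc; rw [dif_pos hS]; rfl
    rw [eigsDesc_of_conj hS.eigenvectorUnitary (fun i => hS.eigenvalues i + μ (σ.symm i)) _
      (hS.add hGH)]
    · rw [← sortDesc_perm _ σ, hA]
      congr 1
      ext i
      simp
    · rw [hG1]
      nth_rewrite 1 [spectral_form hS]
      rw [← add_mul, ← mul_add, Matrix.diagonal_add]
      simp

theorem stmt_3 {d n₀ k : ℕ} (F₀ : Fin n₀ → Fin d → ℂ) (a : Fin k → ℝ)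
    (ha_pos : ∀ i, 0 < a i) (ha_mono : Antitone a)
    (hk : d - (frameOp F₀).rank ≤ k) :
    (IsCompact {ν : Fin d → ℝ | ∃ μ ∈ Gamma d a, ν = fun i => eigsAsc (frameOp F₀) i + μ i} ∧
      Convex ℝ {ν : Fin d → ℝ | ∃ μ ∈ Gamma d a, ν = fun i => eigsAsc (frameOp F₀) i + μ i}) ∧
    {x : Fin d → ℝ | ∃ G : Fin k → Fin d → ℂ,
        (∀ i, normSqVec (G i) = a i) ∧
        eigsDesc (frameOp F₀ + frameOp G) =
          sortDesc (fun i => eigsAsc (frameOp F₀) i + eigsDesc (frameOp G) i) ∧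
        x = eigsDesc (frameOp F₀ + frameOp G)} =
      {x : Fin d → ℝ | ∃ ν ∈ {ν : Fin d → ℝ | ∃ μ ∈ Gamma d a,
          ν = fun i => eigsAsc (frameOp F₀) i + μ i}, x = sortDesc ν} := by
  have ha0 : ∀ i, 0 ≤ a i := fun i => (ha_pos i).le
  have himg : {ν : Fin d → ℝ | ∃ μ ∈ Gamma d a, ν = fun i => eigsAsc (frameOp F₀) i + μ i} =
      (fun μ => eigsAsc (frameOp F₀) + μ) '' Gamma d a := by
    ext ν
    constructor
    · rintro ⟨μ, hμ, rfl⟩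
      exact ⟨μ, hμ, rfl⟩
    · rintro ⟨μ, hμ, rfl⟩
      exact ⟨μ, hμ, rfl⟩
  refine ⟨⟨?_, ?_⟩, ?_⟩
  · rw [himg]
    exact (Gamma_isCompact ha_mono ha0).image (by fun_prop)
  · rw [himg]
    exact (Gamma_convex ha_mono ha0).translate _
  · ext x
    constructor
    · rintro ⟨G, hG, hopt, rfl⟩
      exact ⟨_, ⟨_, eigsDesc_mem_Gamma G a ha_mono ha0 hG, rfl⟩, hopt⟩
    · rintro ⟨ν, ⟨μ, hμ, rfl⟩, rfl⟩
      obtain ⟨G, h1, h2, h3⟩ := exists_optimal F₀ a ha_mono ha0 μ hμ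
      exact ⟨G, h1, by rw [h2, h3], h3.symm⟩
end

section
/- Let (F_0, a) be initial data for the completion problem in ℂ^d, let λ = λ↑(S_0), and let F = (F_0, G) ∈ C_a^op(F_0) with μ = λ(S_G) (arranged in decreasing order). Then there exists an orthonormal basis {v_1,…,v_d} of ℂ^d such that S_0 v_i = λ_i v_i for every i, S_G = Σ_{i=1}^d μ_i · v_i v_i^*, and consequently S_F = S_0 + S_G = Σ_{i=1}^d (λ_i + μ_i) · v_i v_i^*. -/
open Finset
open scoped ComplexOrder

theorem perm_of_multiset {d : ℕ} (x y : Fin d → ℝ)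
    (h : Multiset.map x Finset.univ.val = Multiset.map y Finset.univ.val) :
    ∃ σ : Equiv.Perm (Fin d), x = y ∘ σ := by
  have h1 : (List.ofFn x).Perm (List.ofFn y) := by
    rw [Fin.univ_val_map, Fin.univ_val_map] at h
    exact Multiset.coe_eq_coe.mp h
  have h2 : x ∘ Tuple.sort x = y ∘ Tuple.sort y := by
    apply List.ofFn_injective
    refine (((Tuple.sort x).ofFn_comp_perm x).trans
      (h1.trans ((Tuple.sort y).ofFn_comp_perm y).symm)).eq_of_pairwise'
      (Tuple.monotone_sort x).sortedLE_ofFn.pairwise (Tuple.monotone_sort y).sortedLE_ofFn.pairwise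
  refine ⟨(Tuple.sort x).symm.trans (Tuple.sort y), ?_⟩
  funext i
  have := congrFun h2 ((Tuple.sort x).symm i)
  simpa using this

theorem diag_perm {d : ℕ} {A : Matrix (Fin d) (Fin d) ℂ} (hA : A.IsHermitian)
    {U : Matrix (Fin d) (Fin d) ℂ} (hU : star U * U = 1) (α : Fin d → ℝ)
    (h : A = U * Matrix.diagonal (fun i => (α i : ℂ)) * star U) :
    ∃ σ : Equiv.Perm (Fin d), α = hA.eigenvalues ∘ σ := by
  apply perm_of_multiset
  have h1 : A.charpoly.roots = Multiset.map (fun i => (α i : ℂ)) Finset.univ.val := by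
    rw [h, Matrix.charpoly_mul_comm, ← mul_assoc, hU, one_mul, Matrix.charpoly_diagonal,
      Polynomial.roots_prod]
    · simp
    · exact Finset.prod_ne_zero_iff.mpr fun i _ => Polynomial.X_sub_C_ne_zero _
  rw [hA.roots_charpoly_eq_eigenvalues] at h1
  have h2 := congrArg (Multiset.map Complex.re) h1
  simp only [Multiset.map_map] at h2
  simpa [Function.comp_def] using h2.symm

theorem diag_eig {d : ℕ} {A : Matrix (Fin d) (Fin d) ℂ} (hA : A.IsHermitian) :
    ∃ U : Matrix (Fin d) (Fin d) ℂ, star U * U = 1 ∧ U * star U = 1 ∧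
      A = U * Matrix.diagonal (fun i => (hA.eigenvalues i : ℂ)) * star U := by
  refine ⟨hA.eigenvectorUnitary, Unitary.coe_star_mul_self _, Unitary.coe_mul_star_self _, ?_⟩
  have := hA.spectral_theorem
  rw [Unitary.conjStarAlgAut_apply] at this
  exact this

theorem joint_diag {d : ℕ} {A B : Matrix (Fin d) (Fin d) ℂ} (hA : A.IsHermitian)
    (hB : B.IsHermitian) (hAB : A * B = B * A) :
    ∃ (e : OrthonormalBasis (Fin d) ℂ (EuclideanSpace ℂ (Fin d))) (α β : Fin d → ℝ),
      (∀ i, A.mulVec (e i).ofLp = (α i : ℂ) • (e i).ofLp) ∧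
      (∀ i, B.mulVec (e i).ofLp = (β i : ℂ) • (e i).ofLp) := by
  classical
  have hA' := Matrix.isSymmetric_toEuclideanLin_iff.mpr hA
  have hB' := Matrix.isSymmetric_toEuclideanLin_iff.mpr hB
  have hc : Commute (Matrix.toEuclideanLin A) (Matrix.toEuclideanLin B) := by
    ext x : 1
    simp [Matrix.toLpLin_apply, hAB]
  have hint := hA'.directSum_isInternal_of_commute hB' hc
  have horth := LinearMap.IsSymmetric.orthogonalFamily_eigenspace_inf_eigenspace hA' hB'
  have hfin := WellFoundedGT.finite_ne_bot_of_iSupIndep hint.submodule_iSupIndep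
  have hint2 := DirectSum.isInternal_ne_bot_iff.mpr hint
  have horth2 := horth.comp (γ := {i : ℂ × ℂ // (Module.End.eigenspace (Matrix.toEuclideanLin A) i.2 ⊓ Module.End.eigenspace (Matrix.toEuclideanLin B) i.1) ≠ ⊥}) (f := Subtype.val) Subtype.val_injective
  have : Fintype {i : ℂ × ℂ // (Module.End.eigenspace (Matrix.toEuclideanLin A) i.2 ⊓ Module.End.eigenspace (Matrix.toEuclideanLin B) i.1) ≠ ⊥} := hfin.fintype
  have hn : Module.finrank ℂ (EuclideanSpace ℂ (Fin d)) = d := by simp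
  let e := hint2.subordinateOrthonormalBasis hn horth2
  have he := fun a => hint2.subordinateOrthonormalBasis_subordinate hn a horth2
  have real : ∀ (T : EuclideanSpace ℂ (Fin d) →ₗ[ℂ] EuclideanSpace ℂ (Fin d)) (hT : T.IsSymmetric)
      (c : ℂ) (i : Fin d), T (e i) = c • e i → ((c.re : ℝ) : ℂ) = c := by
    intro T hT c i h
    have : Module.End.HasEigenvalue T c :=
      Module.End.hasEigenvalue_of_hasEigenvector (x := e i)
        ⟨Module.End.mem_eigenspace_iff.mpr h, e.orthonormal.ne_zero i⟩
    exact Complex.conj_eq_iff_re.mp (hT.conj_eigenvalue_eq_self this)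
  refine ⟨e, fun i => (hint2.subordinateOrthonormalBasisIndex hn i horth2).1.2.re,
    fun i => (hint2.subordinateOrthonormalBasisIndex hn i horth2).1.1.re, fun i => ?_, fun i => ?_⟩
  · have h1 := Module.End.mem_eigenspace_iff.mp (he i).1
    rw [real _ hA' _ i h1]
    exact congrArg WithLp.ofLp h1
  · have h1 := Module.End.mem_eigenspace_iff.mp (he i).2
    rw [real _ hB' _ i h1]
    exact congrArg WithLp.ofLp h1

/-- Birkhoff + equality in rearrangement. -/
theorem support_order {d : ℕ} (l m : Fin d → ℝ) (ρ : Equiv.Perm (Fin d))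
    (hanti : Antivary l (m ∘ ρ)) (M : Matrix (Fin d) (Fin d) ℝ)
    (hM : M ∈ doublyStochastic ℝ (Fin d))
    (hsum : ∑ i, ∑ j, M i j * (l i * m j) = ∑ i, l i * m (ρ i))
    {i k j j' : Fin d} (hij : M i j ≠ 0) (hkj : M k j' ≠ 0) (hik : l i < l k) : m j' ≤ m j := by
  obtain ⟨w, hw0, hw1, hwM⟩ := exists_eq_sum_perm_of_mem_doublyStochastic hM
  have hMe : ∀ i j, M i j = ∑ σ : Equiv.Perm (Fin d), w σ * (if σ i = j then 1 else 0) := by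
    intro i j
    rw [← hwM]
    simp [Matrix.sum_apply, Equiv.Perm.permMatrix, PEquiv.toMatrix_apply, eq_comm]
  have hcomp : ∀ σ : Equiv.Perm (Fin d), (m ∘ ρ) ∘ (σ.trans ρ.symm) = m ∘ σ := by
    intro σ; funext x; simp
  have hle : ∀ σ : Equiv.Perm (Fin d), ∑ i, l i * m (ρ i) ≤ ∑ i, l i * m (σ i) := by
    intro σ
    have := hanti.sum_mul_le_sum_mul_comp_perm (σ := σ.trans ρ.symm)
    simpa using this
  have hs2 : ∑ σ : Equiv.Perm (Fin d), w σ * (∑ i, l i * m (σ i) - ∑ i, l i * m (ρ i)) = 0 := by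
    simp only [mul_sub, Finset.sum_sub_distrib]
    rw [← Finset.sum_mul, hw1, one_mul, ← hsum, sub_eq_zero]
    simp only [hMe, Finset.sum_mul, Finset.mul_sum]
    rw [Finset.sum_comm]
    refine Finset.sum_congr rfl fun i _ => ?_
    rw [Finset.sum_comm]
    refine Finset.sum_congr rfl fun σ _ => ?_
    simp
  have hact : ∀ σ, w σ ≠ 0 → Antivary l (m ∘ σ) := by
    intro σ hσ
    have h := (Finset.sum_eq_zero_iff_of_nonneg (fun σ _ =>
      mul_nonneg (hw0 σ) (sub_nonneg.mpr (hle σ)))).mp hs2 σ (Finset.mem_univ _)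
    have h' := (mul_eq_zero.mp h).resolve_left hσ
    have := (hanti.sum_mul_eq_sum_mul_comp_perm_iff (σ := σ.trans ρ.symm)).mp
      (by simpa using sub_eq_zero.mp h')
    rwa [hcomp] at this
  have hex : ∀ i j, M i j ≠ 0 → ∃ σ : Equiv.Perm (Fin d), σ i = j ∧ Antivary l (m ∘ σ) := by
    intro i j h
    rw [hMe] at h
    obtain ⟨σ, _, hσ⟩ := Finset.exists_ne_zero_of_sum_ne_zero h
    refine ⟨σ, ?_, hact σ (left_ne_zero_of_mul hσ)⟩
    by_contra hne
    simp [hne] at hσ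
  obtain ⟨σ, hσ, hσa⟩ := hex i j hij
  obtain ⟨τ, hτ, hτa⟩ := hex k j' hkj
  by_contra hlt
  push Not at hlt
  -- counting
  have c1 : (insert i (univ.filter fun x => l k ≤ l x)).card ≤
      (univ.filter fun y => m y ≤ m j).card := by
    apply Finset.card_le_card_of_injOn σ
    · intro x hx
      simp only [Finset.coe_insert, Finset.coe_filter, Set.mem_insert_iff, Set.mem_ofPred_eq,
        Finset.mem_univ, true_and] at hx ⊢
      rcases hx with rfl | hx
      · rw [hσ]
      · by_contra hc
        push Not at hc
        have := hσa (i := i) (j := x) (by simpa [hσ] using hc)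
        linarith
    · exact σ.injective.injOn
  have c2 : (insert k (univ.filter fun x => ¬ l k ≤ l x)).card ≤
      (univ.filter fun y => ¬ m y ≤ m j).card := by
    apply Finset.card_le_card_of_injOn τ
    · intro x hx
      simp only [Finset.coe_insert, Finset.coe_filter, Set.mem_insert_iff, Set.mem_ofPred_eq,
        Finset.mem_univ, true_and] at hx ⊢
      rcases hx with rfl | hx
      · rw [hτ]; linarith
      · intro hc
        have := hτa (i := x) (j := k) (by simp [hτ]; linarith)
        exact hx this
    · exact τ.injective.injOn
  rw [Finset.card_insert_of_notMem (by simpa using hik)] at c1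
  rw [Finset.card_insert_of_notMem (by simp)] at c2
  have s1 := Finset.card_filter_add_card_filter_not (s := (univ : Finset (Fin d))) (fun x => l k ≤ l x)
  have s2 := Finset.card_filter_add_card_filter_not (s := (univ : Finset (Fin d))) (fun y => m y ≤ m j)
  omega

theorem trace_sq {d : ℕ} {A : Matrix (Fin d) (Fin d) ℂ} (hA : A.IsHermitian) :
    (A * A).trace = ((∑ i, hA.eigenvalues i ^ 2 : ℝ) : ℂ) := by
  obtain ⟨U, h1, h2, h⟩ := diag_eig hA
  have : A * A = U * (Matrix.diagonal (fun i => (hA.eigenvalues i : ℂ)) *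
      Matrix.diagonal (fun i => (hA.eigenvalues i : ℂ)) * star U) := by
    conv_lhs => rw [h]
    simp only [mul_assoc]
    rw [← mul_assoc (star U) U, h1, one_mul]
  rw [this, Matrix.trace_mul_comm, mul_assoc, h1, mul_one, Matrix.diagonal_mul_diagonal,
    Matrix.trace_diagonal]
  push_cast
  simp [sq]

theorem commute_of_trace {d : ℕ} {A B : Matrix (Fin d) (Fin d) ℂ} (hA : A.IsHermitian)
    (hB : B.IsHermitian) (ρ : Equiv.Perm (Fin d))
    (hanti : Antivary hA.eigenvalues (hB.eigenvalues ∘ ρ))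
    (htr : (A * B).trace = ((∑ i, hA.eigenvalues i * hB.eigenvalues (ρ i) : ℝ) : ℂ)) :
    A * B = B * A := by
  obtain ⟨U, hU1, hU2, hUA⟩ := diag_eig hA
  obtain ⟨W, hW1, hW2, hWB⟩ := diag_eig hB
  set l := hA.eigenvalues
  set m := hB.eigenvalues
  set V := star U * W with hV
  have hV1 : V * star V = 1 := by
    rw [hV, star_mul, star_star, mul_assoc, ← mul_assoc W, hW2, one_mul, hU1]
  have hV2 : star V * V = 1 := by
    rw [hV, star_mul, star_star, mul_assoc, ← mul_assoc U, hU2, one_mul, hW1]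
  set N := V * Matrix.diagonal (fun i => (m i : ℂ)) * star V with hN
  have hBN : B = U * N * star U := by
    rw [hN, hV, star_mul, star_star, hWB]
    simp only [mul_assoc]
    rw [← mul_assoc U (star U), hU2, one_mul, mul_one]
  set L := Matrix.diagonal (fun i => (l i : ℂ)) with hL
  have hAB : A * B = U * (L * N) * star U := by
    rw [hUA, hBN]
    simp only [mul_assoc]
    rw [← mul_assoc (star U) U, hU1, one_mul]
  have hBA : B * A = U * (N * L) * star U := by
    rw [hUA, hBN]
    simp only [mul_assoc]
    rw [← mul_assoc (star U) U, hU1, one_mul]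
  have hNe : ∀ i k, N i k = ∑ j, (m j : ℂ) * (V i j * star (V k j)) := by
    intro i k
    rw [hN, Matrix.mul_apply]
    refine Finset.sum_congr rfl fun j _ => ?_
    rw [Matrix.mul_diagonal, Matrix.star_apply]
    ring
  have hVe : ∀ i k, ∑ j, V i j * star (V k j) = if i = k then 1 else 0 := by
    intro i k
    have := congrFun (congrFun hV1 i) k
    rw [Matrix.mul_apply, Matrix.one_apply] at this
    simpa [Matrix.star_apply] using this
  have hVe2 : ∀ i k, ∑ j, star (V j i) * V j k = if i = k then 1 else 0 := by
    intro i k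
    have := congrFun (congrFun hV2 i) k
    rw [Matrix.mul_apply, Matrix.one_apply] at this
    simpa [Matrix.star_apply] using this
  let D : Matrix (Fin d) (Fin d) ℝ := fun i j => Complex.normSq (V i j)
  have hDc : ∀ i j, ((D i j : ℝ) : ℂ) = V i j * star (V i j) := by
    intro i j
    exact (Complex.mul_conj (V i j)).symm
  have hD : D ∈ doublyStochastic ℝ (Fin d) := by
    rw [mem_doublyStochastic_iff_sum]
    refine ⟨fun i j => Complex.normSq_nonneg _, fun i => ?_, fun j => ?_⟩
    · have := hVe i i
      apply Complex.ofReal_injective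
      push_cast
      simp only [hDc, this, if_true]
    · have := hVe2 j j
      apply Complex.ofReal_injective
      push_cast
      simp only [hDc]
      simpa [mul_comm] using this
  have hsum : ∑ i, ∑ j, D i j * (l i * m j) = ∑ i, l i * m (ρ i) := by
    apply Complex.ofReal_injective
    rw [← htr, hAB, Matrix.trace_mul_comm, ← mul_assoc, hU1, one_mul, Matrix.trace]
    push_cast
    refine Finset.sum_congr rfl fun i _ => ?_
    rw [Matrix.diag_apply, hL, Matrix.diagonal_mul, hNe, Finset.mul_sum]
    refine Finset.sum_congr rfl fun j _ => ?_
    rw [hDc]; ring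
  have hDne : ∀ i j, V i j ≠ 0 → D i j ≠ 0 := fun i j h => by
    simpa [D] using h
  -- off-diagonal vanishing
  have hoff : ∀ i k, l i < l k → N i k = 0 := by
    intro i k hik
    rw [hNe]
    by_cases hall : ∀ j, V i j * star (V k j) = 0
    · exact Finset.sum_eq_zero fun j _ => by rw [hall j, mul_zero]
    push Not at hall
    obtain ⟨j0, hj0⟩ := hall
    have hconst : ∀ j, (m j : ℂ) * (V i j * star (V k j)) = (m j0 : ℂ) * (V i j * star (V k j)) := by
      intro j
      by_cases hj : V i j * star (V k j) = 0
      · rw [hj, mul_zero, mul_zero]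
      have a1 := hDne _ _ (left_ne_zero_of_mul hj)
      have a2 := hDne _ _ (star_ne_zero.mp (right_ne_zero_of_mul hj))
      have b1 := hDne _ _ (left_ne_zero_of_mul hj0)
      have b2 := hDne _ _ (star_ne_zero.mp (right_ne_zero_of_mul hj0))
      have e1 := support_order l m ρ hanti D hD hsum a1 b2 hik
      have e2 := support_order l m ρ hanti D hD hsum b1 a2 hik
      rw [le_antisymm e2 e1]
    rw [Finset.sum_congr rfl fun j _ => hconst j, ← Finset.mul_sum, hVe, if_neg, mul_zero]
    rintro rfl
    exact lt_irrefl _ hik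
  have hNh : ∀ i k, N k i = star (N i k) := by
    intro i k
    rw [hNe, hNe, star_sum]
    refine Finset.sum_congr rfl fun j _ => ?_
    simp [mul_comm]
  rw [hAB, hBA]
  congr 2
  ext i k
  rw [hL, Matrix.diagonal_mul, Matrix.mul_diagonal, mul_comm]
  rcases lt_trichotomy (l i) (l k) with h | h | h
  · rw [hoff _ _ h]; simp
  · rw [h]
  · rw [hNh k i, hoff _ _ h]; simp

theorem lex_sort {d : ℕ} (α β : Fin d → ℝ) (h : Antivary α β) :
    ∃ π : Equiv.Perm (Fin d), Monotone (α ∘ π) ∧ Antitone (β ∘ π) := by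
  let f : Fin d → ℝ ×ₗ ℝ := fun i => toLex (α i, - β i)
  have hm := Tuple.monotone_sort f
  refine ⟨Tuple.sort f, fun i j hij => ?_, fun i j hij => ?_⟩
  · rcases Prod.Lex.le_iff.mp (hm hij) with h1 | h1
    · exact h1.le
    · exact h1.1.le
  · rcases Prod.Lex.le_iff.mp (hm hij) with h1 | h1
    · by_contra hc
      push Not at hc
      have := h hc
      exact absurd h1 (not_lt.mpr this)
    · have := h1.2
      simpa [f] using this

theorem frameOp_herm {d n : ℕ} (F : Fin n → Fin d → ℂ) : (frameOp F).IsHermitian := by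
  unfold frameOp Matrix.IsHermitian
  rw [Matrix.conjTranspose_sum]
  refine Finset.sum_congr rfl fun l _ => ?_
  ext i j
  simp [Matrix.vecMulVec_apply, mul_comm]

theorem eigen_expand {d : ℕ} {A U : Matrix (Fin d) (Fin d) ℂ} (α : Fin d → ℝ)
    (hU : U * star U = 1)
    (hA : ∀ i, A.mulVec (fun x => U x i) = (α i : ℂ) • (fun x => U x i)) :
    A = U * Matrix.diagonal (fun i => (α i : ℂ)) * star U := by
  have : A * U = U * Matrix.diagonal (fun i => (α i : ℂ)) := by
    ext x i
    have := congrFun (hA i) x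
    rw [Matrix.mul_diagonal, mul_comm]
    exact this
  rw [← this, mul_assoc, hU, mul_one]

theorem diag_sum {d : ℕ} (U : Matrix (Fin d) (Fin d) ℂ) (c : Fin d → ℂ) :
    U * Matrix.diagonal c * star U =
      ∑ i, c i • Matrix.vecMulVec (fun x => U x i) (star (fun x => U x i)) := by
  ext x y
  rw [Matrix.mul_apply, Matrix.sum_apply]
  refine Finset.sum_congr rfl fun i _ => ?_
  rw [Matrix.mul_diagonal, Matrix.smul_apply, Matrix.vecMulVec_apply, Matrix.star_apply]
  simp only [Pi.star_apply, smul_eq_mul]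
  ring

theorem sum_sortDesc {d : ℕ} (x : Fin d → ℝ) (f : ℝ → ℝ) :
    ∑ i, f (sortDesc x i) = ∑ i, f (x i) := by
  exact Equiv.sum_comp (Fin.revPerm.trans (Tuple.sort x)) (fun i => f (x i))

theorem main_aux {d : ℕ} {A B : Matrix (Fin d) (Fin d) ℂ} (hA : A.IsHermitian)
    (hB : B.IsHermitian)
    (hop : eigsDesc (A + B) = sortDesc (fun i => eigsAsc A i + eigsDesc B i)) :
    ∃ v : Fin d → Fin d → ℂ,
      (∀ i j, ∑ x, (starRingEnd ℂ) (v i x) * v j x = if i = j then 1 else 0) ∧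
      (∀ i, A.mulVec (v i) = (eigsAsc A i : ℂ) • v i) ∧
      B = ∑ i, (eigsDesc B i : ℂ) • Matrix.vecMulVec (v i) (star (v i)) ∧
      A + B = ∑ i, ((eigsAsc A i + eigsDesc B i : ℝ) : ℂ) •
          Matrix.vecMulVec (v i) (star (v i)) := by
  have hAB := hA.add hB
  have eAB : eigsDesc (A + B) = sortDesc hAB.eigenvalues := by simp [eigsDesc, hAB]
  set l := hA.eigenvalues with hl
  set m := hB.eigenvalues with hm
  let p : Equiv.Perm (Fin d) := Tuple.sort l
  let q : Equiv.Perm (Fin d) := Fin.revPerm.trans (Tuple.sort m)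
  have eA : eigsAsc A = l ∘ p := by simp [eigsAsc, hA, sortAsc, p, hl]
  have eB : eigsDesc B = m ∘ q := by
    funext i
    simp [eigsDesc, hB, sortDesc, q, hm]
  have mp : Monotone (l ∘ p) := Tuple.monotone_sort l
  have mq : Antitone (m ∘ q) := fun i j hij =>
    Tuple.monotone_sort m (Fin.rev_le_rev.mpr hij)
  let ρ := p.symm.trans q
  have hanti : Antivary l (m ∘ ρ) := by
    have := (mp.antivary mq).comp_right p.symm
    have e1 : (l ∘ p) ∘ p.symm = l := by funext i; simp
    rw [e1] at this
    exact this
  have hsumρ : ∑ i, l (p i) * m (q i) = ∑ i, l i * m (ρ i) := by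
    rw [← Equiv.sum_comp p (fun i => l i * m (ρ i))]
    simp [ρ]
  have htr : (A * B).trace = ((∑ i, l i * m (ρ i) : ℝ) : ℂ) := by
    have t1 := trace_sq hA
    have t2 := trace_sq hB
    have t3 := trace_sq hAB
    have s1 : ∑ i, hAB.eigenvalues i ^ 2 = ∑ i, (l (p i) + m (q i)) ^ 2 := by
      rw [← sum_sortDesc hAB.eigenvalues (fun x => x ^ 2), ← eAB, hop,
        sum_sortDesc _ (fun x => x ^ 2), eA, eB]
      rfl
    have s2 : ∑ i, (l (p i) + m (q i)) ^ 2 =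
        ∑ i, l i ^ 2 + 2 * ∑ i, l i * m (ρ i) + ∑ i, m i ^ 2 := by
      rw [← hsumρ, ← Equiv.sum_comp p (fun i => l i ^ 2), ← Equiv.sum_comp q (fun i => m i ^ 2),
        Finset.mul_sum, ← Finset.sum_add_distrib, ← Finset.sum_add_distrib]
      refine Finset.sum_congr rfl fun i _ => ?_
      ring
    rw [s1, s2] at t3
    have t4 : ((A + B) * (A + B)).trace = (A * A).trace + 2 * (A * B).trace + (B * B).trace := by
      rw [add_mul, mul_add, mul_add, Matrix.trace_add, Matrix.trace_add, Matrix.trace_add,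
        Matrix.trace_mul_comm B A]
      ring
    rw [t4, t1, t2] at t3
    push_cast at t3 ⊢
    linear_combination t3 / 2
  have hcomm := commute_of_trace hA hB ρ hanti htr
  obtain ⟨e, α, β, hα, hβ⟩ := joint_diag hA hB hcomm
  -- unitary matrix of the basis
  have horth : ∀ i j, ∑ x, (starRingEnd ℂ) ((e i).ofLp x) * (e j).ofLp x = if i = j then 1 else 0 := by
    intro i j
    have := orthonormal_iff_ite.mp e.orthonormal i j
    rw [← this, PiLp.inner_apply]
    refine Finset.sum_congr rfl fun x _ => ?_
    simp [mul_comm]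
  have key : ∀ π : Equiv.Perm (Fin d), ∃ U : Matrix (Fin d) (Fin d) ℂ,
      (∀ i, (fun x => U x i) = (e (π i)).ofLp) ∧ star U * U = 1 ∧ U * star U = 1 := by
    intro π
    let U : Matrix (Fin d) (Fin d) ℂ := fun x i => (e (π i)).ofLp x
    have h1 : star U * U = 1 := by
      ext i j
      rw [Matrix.mul_apply, Matrix.one_apply]
      have := horth (π i) (π j)
      simp only [π.injective.eq_iff] at this
      rw [← this]
      rfl
    exact ⟨U, fun i => rfl, h1, mul_eq_one_comm.mp h1⟩
  obtain ⟨U, hUe, hU1, hU2⟩ := key 1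
  have dA := eigen_expand (A := A) α hU2 (fun i => by rw [hUe]; exact hα i)
  have dB := eigen_expand (A := B) β hU2 (fun i => by rw [hUe]; exact hβ i)
  obtain ⟨s, hs⟩ := diag_perm hA hU1 α dA
  obtain ⟨t, ht⟩ := diag_perm hB hU1 β dB
  have htr2 : (A * B).trace = ((∑ i, α i * β i : ℝ) : ℂ) := by
    have : A * B = U * (Matrix.diagonal (fun i => (α i : ℂ)) *
        Matrix.diagonal (fun i => (β i : ℂ)) * star U) := by
      conv_lhs => rw [dA, dB]
      simp only [mul_assoc]
      rw [← mul_assoc (star U) U, hU1, one_mul]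
    rw [this, Matrix.trace_mul_comm, mul_assoc, hU1, mul_one, Matrix.diagonal_mul_diagonal,
      Matrix.trace_diagonal]
    push_cast
    rfl
  have hsum2 : ∑ i, α i * β i = ∑ i, l i * m (ρ i) :=
    Complex.ofReal_injective (htr2.symm.trans htr)
  have hαβ : Antivary α β := by
    have h1 : ∑ i, l i * (m ∘ ρ) ((s.symm.trans (t.trans ρ.symm)) i) = ∑ i, l i * (m ∘ ρ) i := by
      rw [← Equiv.sum_comp s]
      simp only [Function.comp_apply]
      rw [← hsum2, hs, ht]
      simp [hl, hm]
    have h2 := (hanti.sum_mul_eq_sum_mul_comp_perm_iff).mp h1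
    have h3 := h2.comp_right s
    have e1 : ((m ∘ ρ) ∘ (s.symm.trans (t.trans ρ.symm))) ∘ s = β := by
      rw [ht]
      funext i
      simp [hm]
    rw [e1, hl, ← hs] at h3
    exact h3
  obtain ⟨π, hπ1, hπ2⟩ := lex_sort α β hαβ
  have fA : eigsAsc A = α ∘ π := by
    rw [eA, hs]
    exact Tuple.unique_monotone (σ := p) (τ := π.trans s) mp (by rw [hs] at hπ1; exact hπ1)
  have fB : eigsDesc B = β ∘ π := by
    rw [eB, ht]
    exact Tuple.unique_antitone (σ := q) (τ := π.trans t) mq (by rw [ht] at hπ2; exact hπ2)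
  obtain ⟨V, hVe, hV1, hV2⟩ := key π
  have gA := eigen_expand (A := A) (eigsAsc A) hV2 (fun i => by rw [hVe, fA]; exact hα _)
  have gB := eigen_expand (A := B) (eigsDesc B) hV2 (fun i => by rw [hVe, fB]; exact hβ _)
  have gA' := gA.trans (diag_sum _ _)
  have gB' := gB.trans (diag_sum _ _)
  refine ⟨fun i x => V x i, fun i j => ?_, fun i => ?_, gB', ?_⟩
  · have := congrFun (congrFun hV1 i) j
    rw [Matrix.mul_apply, Matrix.one_apply] at this
    exact this
  · have := hα (π i)
    rw [← hVe] at this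
    rw [fA]
    exact this
  · conv_lhs => rw [gA', gB']
    rw [← Finset.sum_add_distrib]
    refine Finset.sum_congr rfl fun i _ => ?_
    push_cast
    rw [add_smul]

theorem stmt_4 {d n₀ k : ℕ} (F₀ : Fin n₀ → Fin d → ℂ) (a : Fin k → ℝ)
    (ha_pos : ∀ i, 0 < a i) (ha_mono : Antitone a)
    (hk : d - (frameOp F₀).rank ≤ k)
    (G : Fin k → Fin d → ℂ) (hG : ∀ i, normSqVec (G i) = a i)
    (hop : eigsDesc (frameOp F₀ + frameOp G) =
      sortDesc (fun i => eigsAsc (frameOp F₀) i + eigsDesc (frameOp G) i)) :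
    ∃ v : Fin d → Fin d → ℂ,
      (∀ i j, ∑ x, (starRingEnd ℂ) (v i x) * v j x = if i = j then 1 else 0) ∧
      (∀ i, (frameOp F₀).mulVec (v i) = (eigsAsc (frameOp F₀) i : ℂ) • v i) ∧
      frameOp G = ∑ i, (eigsDesc (frameOp G) i : ℂ) • Matrix.vecMulVec (v i) (star (v i)) ∧
      frameOp F₀ + frameOp G =
        ∑ i, ((eigsAsc (frameOp F₀) i + eigsDesc (frameOp G) i : ℝ) : ℂ) •
          Matrix.vecMulVec (v i) (star (v i)) := by
  exact main_aux (frameOp_herm F₀) (frameOp_herm G) hop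
end
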